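/- Let 0 < ε < 1/2 and suppose the parameter b satisfies b/R^(1+ε) = ((1+ε)^(3ε−1)/(2ε·ε)^ε)·(γ_d/R)^(1−ε) (i.e. the choice of Theorem 3 with δ = ε). If a : ℕ → E is an ℓ-margitron run of length t_c ≥ 1 that has converged after t_c updates, i.e. ⟨a_{t_c}, y_k⟩ > b·‖a_{t_c}‖^(1−ε) for every k ∈ {1, …, n}, then the achieved directional margin γ'_d := min_k ⟨a_{t_c}/‖a_{t_c}‖, y_k⟩ satisfies γ'_d ≥ (1 + 2ε)^(−1)·γ_d ≥ (1 − 2ε)·γ_d. -/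

import Mathlib

open scoped RealInnerProductSpace

lemma sum_aux (ε : ℝ) (hε : 0 < ε) (hε1 : ε < 1 / 2) (t : ℕ) :
    ∑ m ∈ Finset.range (t + 1), ((m : ℝ) + 1) ^ (ε - 1) ≤ 1 + (((t : ℝ) + 1) ^ ε - 1) / ε := by
  induction t with
  | zero => simp
  | succ t ih =>
    rw [Finset.sum_range_succ]
    push_cast
    set s : ℝ := (t : ℝ) + 1 + 1 with hs
    have ht : (0 : ℝ) ≤ t := Nat.cast_nonneg t
    have hs0 : 0 < s := by positivity
    have h1 : (1 + (-1 / s)) ^ ε ≤ 1 + ε * (-1 / s) := by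
      apply rpow_one_add_le_one_add_mul_self _ hε.le (by linarith)
      rw [le_div_iff₀ hs0]; linarith
    have h2 : (t : ℝ) + 1 = s * (1 + (-1 / s)) := by field_simp; linarith
    have h3 : (0 : ℝ) ≤ 1 + (-1 / s) := by
      by_contra h
      push Not at h
      have := mul_neg_of_pos_of_neg hs0 h
      linarith
    have h4 : ((t : ℝ) + 1) ^ ε = s ^ ε * (1 + (-1 / s)) ^ ε := by
      rw [h2, Real.mul_rpow hs0.le h3]
    have h5 : s ^ ε = s * s ^ (ε - 1) := by
      rw [Real.rpow_sub_one hs0.ne']; field_simp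
    have h6 : ((t : ℝ) + 1) ^ ε ≤ s ^ ε - ε * s ^ (ε - 1) := by
      rw [h4]
      calc s ^ ε * (1 + (-1 / s)) ^ ε ≤ s ^ ε * (1 + ε * (-1 / s)) := by gcongr
        _ = s ^ ε - ε * s ^ (ε - 1) := by rw [h5]; field_simp; ring
    have h7 : (((t : ℝ) + 1) ^ ε - 1) / ε ≤ (s ^ ε - 1) / ε - s ^ (ε - 1) := by
      rw [div_le_iff₀ hε, sub_mul, div_mul_cancel₀ _ hε.ne']; linarith
    linarith

lemma step_aux (ε b x x' : ℝ) (hε : 0 < ε) (hε1 : ε < 1 / 2) (hx : 0 < x) (hx' : 0 ≤ x')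
    (h : x' ^ 2 ≤ x ^ 2 + 1 + 2 * (b * x ^ (1 - ε))) (hb : 0 < b) :
    x' ^ (1 + ε) ≤ x ^ (1 + ε) + (1 + ε) * b + (1 + ε) / 2 * x ^ (ε - 1) := by
  set p := x ^ (1 - ε) with hp
  have hp0 : 0 < p := by positivity
  set q := (1 + 2 * (b * p)) / x ^ 2 with hq
  have hq0 : 0 ≤ q := by positivity
  have e1 : ∀ w : ℝ, 0 ≤ w → w ^ (1 + ε) = (w ^ 2) ^ ((1 + ε) / 2) := by
    intro w hw
    rw [← Real.rpow_natCast, ← Real.rpow_mul hw]; congr 1; push_cast; ring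
  have h1 : (1 + q) ^ ((1 + ε) / 2) ≤ 1 + (1 + ε) / 2 * q :=
    rpow_one_add_le_one_add_mul_self (by linarith) (by linarith) (by linarith)
  have h2 : x ^ 2 + 1 + 2 * (b * p) = x ^ 2 * (1 + q) := by rw [hq]; field_simp; ring
  have hr : x ^ (ε - 1) = 1 / p := by
    rw [hp, one_div, ← Real.rpow_neg hx.le]; congr 1; ring
  have h3 : x ^ (1 + ε) = x ^ 2 / p := by
    rw [hp, ← Real.rpow_natCast x 2, ← Real.rpow_sub hx]; congr 1; push_cast; ring
  calc x' ^ (1 + ε) = (x' ^ 2) ^ ((1 + ε) / 2) := e1 _ hx'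
    _ ≤ (x ^ 2 * (1 + q)) ^ ((1 + ε) / 2) := by
        apply Real.rpow_le_rpow (by positivity) (by linarith) (by linarith)
    _ = x ^ (1 + ε) * (1 + q) ^ ((1 + ε) / 2) := by
        rw [Real.mul_rpow (by positivity) (by positivity), ← e1 _ hx.le]
    _ ≤ x ^ (1 + ε) * (1 + (1 + ε) / 2 * q) := by gcongr
    _ = _ := by rw [hr, h3, hq]; field_simp; ring

lemma final_aux (ε γ N C : ℝ) (hε : 0 < ε) (hε1 : ε < 1 / 2) (hγ : 0 < γ) (hN : 0 < N)
    (hC : C = (1 + ε) ^ (3 * ε - 1) / (2 * ε * ε) ^ ε)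
    (h : N ^ (1 + ε) ≤ 1 + (1 + ε) * (C * γ ^ (1 - ε)) * (N / γ - 1)
      + (1 + ε) / 2 * γ ^ (ε - 1) * (1 + ((N / γ) ^ ε - 1) / ε)) :
    N ^ ε * γ ≤ C * γ ^ (1 - ε) * (1 + 2 * ε) := by
  by_contra hcon
  push Not at hcon
  have hC0 : 0 < C := by rw [hC]; positivity
  have hC1 : 2 / 3 ≤ C := by
    rw [hC, le_div_iff₀ (by positivity)]
    have h1 : (2 * ε * ε) ^ ε ≤ 1 := Real.rpow_le_one (by positivity) (by nlinarith) hε.le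
    have h2 : (1 + ε) ^ (-1 : ℝ) ≤ (1 + ε) ^ (3 * ε - 1) :=
      Real.rpow_le_rpow_of_exponent_le (by linarith) (by linarith)
    have h3 : (2 / 3 : ℝ) ≤ (1 + ε) ^ (-1 : ℝ) := by
      rw [Real.rpow_neg_one, inv_eq_one_div, le_div_iff₀ (by linarith)]; linarith
    linarith
  set g := γ ^ (1 - ε) with hg
  have hg0 : 0 < g := by positivity
  have hgi : γ ^ (ε - 1) = 1 / g := by
    rw [hg, one_div, ← Real.rpow_neg hγ.le]; congr 1; ring
  rw [hgi] at h
  set w := N / γ with hw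
  have hw0 : 0 < w := by positivity
  have hNw : N = w * γ := by rw [hw]; field_simp
  have hN1 : N ^ (1 + ε) = N ^ ε * γ * w := by
    rw [add_comm, Real.rpow_add_one hN.ne', mul_assoc, mul_comm γ w, ← hNw]
  have h1 : C * g * (1 + 2 * ε) * w < N ^ (1 + ε) := by rw [hN1]; gcongr
  have h2 : 1 ≤ (1 + ε) * (C * g) + (1 + ε) / 2 * (1 / g) * (1 / ε - 1) := by
    have h3 : 1 ≤ 1 / ε - 1 := by
      have : 2 ≤ 1 / ε := by rw [le_div_iff₀ hε]; linarith
      linarith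
    have h4 : (1 + ε) / 2 * (1 / g) * 1 ≤ (1 + ε) / 2 * (1 / g) * (1 / ε - 1) := by gcongr
    have h5 : 1 / 2 * (1 / g) ≤ (1 + ε) / 2 * (1 / g) * 1 := by
      rw [mul_one]; gcongr; linarith
    have h6 : 1 * (2 / 3 * g) ≤ (1 + ε) * (C * g) := by gcongr; linarith
    have h7 : 1 ≤ 2 / 3 * g + 1 / 2 * (1 / g) := by
      rw [← sub_nonneg]
      have : 2 / 3 * g + 1 / 2 * (1 / g) - 1 = (4 * g ^ 2 + 3 - 6 * g) / (6 * g) := by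
        field_simp; ring
      rw [this]
      apply div_nonneg _ (by positivity)
      nlinarith [sq_nonneg (4 * g - 3)]
    linarith
  have h3 : ε * (C * g) * w < (1 + ε) / 2 * (1 / g) * (w ^ ε / ε) := by
    have e : (1 + ε) / 2 * (1 / g) * (1 + (w ^ ε - 1) / ε) =
      (1 + ε) / 2 * (1 / g) * (w ^ ε / ε) - (1 + ε) / 2 * (1 / g) * (1 / ε - 1) := by ring
    rw [e] at h
    linarith
  -- z = N * γ
  set z := N * γ with hz
  have hz0 : 0 < z := by positivity
  have hγε : γ = γ ^ ε * g := by
    rw [hg, ← Real.rpow_add hγ]; simp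
  have hzε : C * (1 + 2 * ε) < z ^ ε := by
    have : C * (1 + 2 * ε) * g < z ^ ε * g := by
      rw [hz, Real.mul_rpow hN.le hγ.le, mul_assoc (N ^ ε), ← hγε]; linarith
    exact lt_of_mul_lt_mul_right this hg0.le
  have hzw : z ^ (1 - ε) = g ^ 2 * (w / w ^ ε) := by
    rw [hz, hNw, Real.mul_rpow (by positivity) hγ.le, Real.mul_rpow hw0.le hγ.le, ← hg,
      Real.rpow_sub hw0, Real.rpow_one]; ring
  have h4 : (2 * ε * ε) * C * z ^ (1 - ε) < 1 + ε := by
    rw [hzw]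
    have hwε : 0 < w ^ ε := by positivity
    have := mul_lt_mul_of_pos_right h3 (show 0 < 2 * ε * g / w ^ ε by positivity)
    calc (2 * ε * ε) * C * (g ^ 2 * (w / w ^ ε)) = ε * (C * g) * w * (2 * ε * g / w ^ ε) := by ring
      _ < _ := this
      _ = 1 + ε := by field_simp
  have h5 : ((2 * ε * ε) * C * z ^ (1 - ε)) ^ ε ≤ (1 + ε) ^ ε :=
    Real.rpow_le_rpow (by positivity) h4.le hε.le
  rw [Real.mul_rpow (by positivity) (by positivity), Real.mul_rpow (by positivity) hC0.le,
    ← Real.rpow_mul hz0.le, mul_comm (1 - ε) ε, Real.rpow_mul hz0.le] at h5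
  have h6 : (C * (1 + 2 * ε)) ^ (1 - ε) < (z ^ ε) ^ (1 - ε) :=
    Real.rpow_lt_rpow (by positivity) hzε (by linarith)
  have h7 : (2 * ε * ε) ^ ε * C ^ ε * (C * (1 + 2 * ε)) ^ (1 - ε) < (1 + ε) ^ ε :=
    lt_of_lt_of_le (by gcongr) h5
  have hCC : C ^ ε * C ^ (1 - ε) = C := by
    rw [← Real.rpow_add hC0]; simp
  have h8 : (1 + ε) ^ (3 * ε - 1) * (1 + 2 * ε) ^ (1 - ε) < (1 + ε) ^ ε := by
    have e : (2 * ε * ε) ^ ε * C = (1 + ε) ^ (3 * ε - 1) := by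
      rw [hC]; field_simp
    calc _ = (2 * ε * ε) ^ ε * C ^ ε * (C * (1 + 2 * ε)) ^ (1 - ε) := by
          rw [Real.mul_rpow hC0.le (by positivity), ← e]
          nth_rewrite 1 [← hCC]; ring
      _ < _ := h7
  have h9 : (1 + ε) ^ (1 - ε) ≤ (1 + 2 * ε) ^ (1 - ε) :=
    Real.rpow_le_rpow (by linarith) (by linarith) (by linarith)
  have h10 : (1 + ε) ^ ε ≤ (1 + ε) ^ (3 * ε - 1) * (1 + ε) ^ (1 - ε) := by
    rw [← Real.rpow_add (by linarith)]
    exact Real.rpow_le_rpow_of_exponent_le (by linarith) (by linarith)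
  have h11 : (1 + ε) ^ (3 * ε - 1) * (1 + ε) ^ (1 - ε) ≤
      (1 + ε) ^ (3 * ε - 1) * (1 + 2 * ε) ^ (1 - ε) := by gcongr
  linarith

lemma scalar_aux (ε γ C b : ℝ) (hε : 0 < ε) (hε1 : ε < 1 / 2) (hγ : 0 < γ)
    (hC : C = (1 + ε) ^ (3 * ε - 1) / (2 * ε * ε) ^ ε) (hb : b = C * γ ^ (1 - ε))
    (tc : ℕ) (x : ℕ → ℝ) (hx1 : x 1 ≤ 1)
    (hlow : ∀ t ≤ tc + 1, γ * t ≤ x t)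
    (hstep : ∀ t, 1 ≤ t → t < tc + 1 → x (t + 1) ^ 2 ≤ x t ^ 2 + 1 + 2 * (b * x t ^ (1 - ε))) :
    x (tc + 1) ^ ε * γ ≤ b * (1 + 2 * ε) := by
  have hC0 : 0 < C := by rw [hC]; positivity
  have hb0 : 0 < b := by rw [hb]; positivity
  have main : ∀ t ≤ tc, x (t + 1) ^ (1 + ε) ≤ 1 + (1 + ε) * b * t
      + (1 + ε) / 2 * γ ^ (ε - 1) * ∑ m ∈ Finset.range t, ((m : ℝ) + 1) ^ (ε - 1) := by
    intro t
    induction t with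
    | zero =>
      intro _
      have := hlow 1 (by omega)
      push_cast at this
      simp only [zero_add, Nat.cast_zero, mul_zero, add_zero, Finset.range_zero, Finset.sum_empty]
      exact Real.rpow_le_one (by linarith) hx1 (by linarith)
    | succ t ih =>
      intro ht
      have h0 := ih (by omega)
      have hl := hlow (t + 1) (by omega)
      have hl' := hlow (t + 1 + 1) (by omega)
      push_cast at hl hl'
      have hp : 0 < γ * ((t : ℝ) + 1) := by positivity
      have hp' : 0 < γ * ((t : ℝ) + 1 + 1) := by positivity
      have hs := step_aux ε b (x (t + 1)) (x (t + 1 + 1)) hε hε1 (by linarith) (by linarith)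
        (hstep (t + 1) (by omega) (by omega)) hb0
      have hk : x (t + 1) ^ (ε - 1) ≤ γ ^ (ε - 1) * ((t : ℝ) + 1) ^ (ε - 1) := by
        rw [← Real.mul_rpow hγ.le (by positivity)]
        exact Real.rpow_le_rpow_of_nonpos hp hl (by linarith)
      have hk' : (1 + ε) / 2 * x (t + 1) ^ (ε - 1) ≤
          (1 + ε) / 2 * (γ ^ (ε - 1) * ((t : ℝ) + 1) ^ (ε - 1)) := by gcongr
      rw [Finset.sum_range_succ]
      push_cast
      linarith
  have hl := hlow (tc + 1) le_rfl
  push_cast at hl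
  have hp : 0 < γ * ((tc : ℝ) + 1) := by positivity
  have hN : 0 < x (tc + 1) := by linarith
  have hT : (tc : ℝ) + 1 ≤ x (tc + 1) / γ := by rw [le_div_iff₀ hγ]; linarith
  rw [hb]
  apply final_aux ε γ _ C hε hε1 hγ hN hC
  rw [← hb]
  have hm := main tc le_rfl
  have hs := sum_aux ε hε hε1 tc
  rw [Finset.sum_range_succ] at hs
  have hq : 0 < ((tc : ℝ) + 1) ^ (ε - 1) := by positivity
  have hS : ∑ m ∈ Finset.range tc, ((m : ℝ) + 1) ^ (ε - 1) ≤
      1 + ((x (tc + 1) / γ) ^ ε - 1) / ε := by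
    have : (((tc : ℝ) + 1) ^ ε - 1) / ε ≤ ((x (tc + 1) / γ) ^ ε - 1) / ε := by gcongr
    linarith
  have h1 : (1 + ε) * b * tc ≤ (1 + ε) * b * (x (tc + 1) / γ - 1) := by gcongr; linarith
  have h2 : (1 + ε) / 2 * γ ^ (ε - 1) * ∑ m ∈ Finset.range tc, ((m : ℝ) + 1) ^ (ε - 1) ≤
      (1 + ε) / 2 * γ ^ (ε - 1) * (1 + ((x (tc + 1) / γ) ^ ε - 1) / ε) := by gcongr
  linarith

/-- with 0 < ε < 1/2 and b/R^(1+ε) = ((1+ε)^(3ε−1)/(2ε·ε)^ε)·(γ_d/R)^(1−ε),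
a converged ℓ-margitron run achieves γ'_d ≥ (1+2ε)⁻¹·γ_d ≥ (1−2ε)·γ_d. -/
theorem stmt15 {E : Type*} [NormedAddCommGroup E] [InnerProductSpace ℝ E]
    {n : ℕ} (hn : 0 < n) (y : Fin n → E)
    (R : ℝ) (hR : IsGreatest (Set.range (fun k : Fin n => ‖y k‖)) R)
    (u : E) (hu : ‖u‖ = 1) (γd : ℝ) (hγd : 0 < γd)
    (hmargin : ∀ k : Fin n, γd ≤ ⟪u, y k⟫)
    (ε b : ℝ) (hε : 0 < ε) (hε1 : ε < 1 / 2) (hb : 0 < b)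
    (hbeq : b / R ^ (1 + ε) =
      ((1 + ε) ^ (3 * ε - 1) / (2 * ε * ε) ^ ε) * (γd / R) ^ (1 - ε))
    (tc : ℕ) (htc : 1 ≤ tc) (a : ℕ → E) (ha0 : a 0 = 0)
    (hrun : ∀ t : ℕ, t < tc → ∃ k : Fin n, a (t + 1) = a t + y k ∧
      ⟪a t, y k⟫ ≤ if t = 0 then 0 else b * ‖a t‖ ^ (1 - ε))
    (hconv : ∀ k : Fin n, b * ‖a tc‖ ^ (1 - ε) < ⟪a tc, y k⟫) :
    (1 + 2 * ε)⁻¹ * γd ≤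
      (Finset.univ.inf' (Finset.univ_nonempty_iff.mpr ⟨⟨0, hn⟩⟩)
        (fun k : Fin n => ⟪(‖a tc‖)⁻¹ • a tc, y k⟫)) ∧
    (1 - 2 * ε) * γd ≤ (1 + 2 * ε)⁻¹ * γd := by
  refine ⟨?_, ?_⟩
  swap
  · apply mul_le_mul_of_nonneg_right _ hγd.le
    rw [inv_eq_one_div, le_div_iff₀ (by linarith)]
    nlinarith [sq_nonneg ε]
  have hyR : ∀ k, ‖y k‖ ≤ R := fun k => hR.2 ⟨k, rfl⟩
  have hR0 : 0 < R := by
    have h1 := hmargin ⟨0, hn⟩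
    have h2 := real_inner_le_norm u (y ⟨0, hn⟩)
    rw [hu, one_mul] at h2
    linarith [hyR ⟨0, hn⟩]
  obtain ⟨tc, rfl⟩ : ∃ s, tc = s + 1 := ⟨tc - 1, by omega⟩
  have hlow' : ∀ t ≤ tc + 1, γd * t ≤ ⟪u, a t⟫ := by
    intro t
    induction t with
    | zero => intro _; simp [ha0]
    | succ t ih =>
      intro ht
      obtain ⟨k, hk, -⟩ := hrun t (by omega)
      rw [hk, inner_add_right]
      push_cast
      linarith [ih (by omega), hmargin k]
  have hlow : ∀ t ≤ tc + 1, γd * t ≤ ‖a t‖ := by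
    intro t ht
    have h2 := real_inner_le_norm u (a t)
    rw [hu, one_mul] at h2
    exact (hlow' t ht).trans h2
  set b' := b / R ^ (1 + ε) with hb'
  have hbb : b = b' * R ^ (1 + ε) := by rw [hb']; field_simp
  have hRR : R ^ (1 + ε) * R ^ (1 - ε) = R ^ 2 := by
    rw [← Real.rpow_add hR0, ← Real.rpow_natCast]; congr 1; push_cast; ring
  have key := scalar_aux ε (γd / R) _ b' hε hε1 (by positivity) rfl hbeq tc (fun t => ‖a t‖ / R)
    (by
      obtain ⟨k, hk, -⟩ := hrun 0 (by omega)
      simp only [zero_add] at hk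
      rw [ha0, zero_add] at hk
      simp only [hk]
      rw [div_le_one hR0]; exact hyR k)
    (by
      intro t ht
      have := hlow t ht
      rw [div_mul_eq_mul_div]
      gcongr)
    (by
      intro t ht1 ht
      obtain ⟨k, hk, hm⟩ := hrun t ht
      rw [if_neg (by omega)] at hm
      have e : b * ‖a t‖ ^ (1 - ε) = b' * (‖a t‖ / R) ^ (1 - ε) * R ^ 2 := by
        rw [Real.div_rpow (norm_nonneg _) hR0.le, ← hRR, hbb]
        have : 0 < R ^ (1 - ε) := by positivity
        field_simp
      have h1 : ‖a (t + 1)‖ ^ 2 = ‖a t‖ ^ 2 + 2 * ⟪a t, y k⟫ + ‖y k‖ ^ 2 := by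
        rw [hk]; exact norm_add_sq_real _ _
      have h2 : ‖y k‖ ^ 2 ≤ R ^ 2 := by gcongr; exact hyR k
      rw [div_pow, div_le_iff₀ (by positivity), add_mul, add_mul, div_pow,
        div_mul_cancel₀ _ (by positivity)]
      linarith)
  have hl := hlow (tc + 1) le_rfl
  push_cast at hl
  set N := ‖a (tc + 1)‖ with hN
  have hN0 : 0 < N := lt_of_lt_of_le (by positivity) hl
  apply Finset.le_inf'
  intro k _
  rw [real_inner_smul_left]
  have hk := hconv k
  have h1 : N ^ (1 - ε) = N / N ^ ε := by rw [Real.rpow_sub hN0, Real.rpow_one]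
  have h2 : (1 + 2 * ε)⁻¹ * γd ≤ N⁻¹ * (b * N ^ (1 - ε)) := by
    rw [h1, hbb]
    have e : N⁻¹ * (b' * R ^ (1 + ε) * (N / N ^ ε)) = b' * R ^ (1 + ε) / N ^ ε := by
      field_simp
    rw [e, le_div_iff₀ (by positivity), inv_mul_eq_div, div_mul_eq_mul_div,
      div_le_iff₀ (by positivity)]
    rw [Real.div_rpow hN0.le hR0.le] at key
    have hRe : R ^ (1 + ε) = R * R ^ ε := by rw [Real.rpow_add hR0, Real.rpow_one]
    have hRε : 0 < R ^ ε := by positivity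
    rw [hRe]
    calc γd * N ^ ε = N ^ ε / R ^ ε * (γd / R) * (R * R ^ ε) := by field_simp
      _ ≤ b' * (1 + 2 * ε) * (R * R ^ ε) := by gcongr
      _ = _ := by ring
  have h3 : N⁻¹ * (b * N ^ (1 - ε)) ≤ N⁻¹ * ⟪a (tc + 1), y k⟫ := by gcongr
  exact h2.trans h3
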